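/- The ideal 𝒫_{m,n}·C_{m,n}(N) of the centralizer algebra C_{m,n}(N) is isomorphic as an algebra to the group algebra ℂ[𝔖_m × 𝔖_n] if and only if N ≥ m + n. -/

import Mathlib

open scoped BigOperators

noncomputable section

/-- Mixed tensors of valence (m,n) on an N-dimensional space, given by components. -/
abbrev Tens (N m n : ℕ) := (Fin m → Fin N) → (Fin n → Fin N) → ℂ

namespace Mixed

variable (N : ℕ)

/-- Permutation of the contravariant (V) factors. -/
def permU (m n : ℕ) (p : Equiv.Perm (Fin m)) : Module.End ℂ (Tens N m n) where
  toFun t := fun i j => t (i ∘ p) j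
  map_add' t s := rfl
  map_smul' c t := rfl

/-- Permutation of the covariant (V*) factors. -/
def permD (m n : ℕ) (q : Equiv.Perm (Fin n)) : Module.End ℂ (Tens N m n) where
  toFun t := fun i j => t i (j ∘ q)
  map_add' t s := rfl
  map_smul' c t := rfl

/-- The contraction map `tr_{ab'}` (the result, a tensor of valence (m−1,n−1), is
recorded as a function not depending on the slots a, b). -/
def ctr (m n : ℕ) (a : Fin m) (b : Fin n) : Tens N m n →ₗ[ℂ] Tens N m n where
  toFun t := fun i j => ∑ k : Fin N,
    t (Function.update i a k) (Function.update j b k)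
  map_add' t s := by funext i j; simp [Finset.sum_add_distrib]
  map_smul' c t := by funext i j; simp [Finset.mul_sum]

/-- The contraction-insertion endomorphism `τ_{ab'} = tr⁺_{ab'} ∘ tr_{ab'}`. -/
def tauC (m n : ℕ) (a : Fin m) (b : Fin n) : Module.End ℂ (Tens N m n) where
  toFun t := fun i j =>
    if i a = j b then
      ∑ k : Fin N, t (Function.update i a k) (Function.update j b k)
    else 0
  map_add' t s := by
    funext i j; by_cases h : i a = j b <;> simp [h, Finset.sum_add_distrib]
  map_smul' c t := by
    funext i j; by_cases h : i a = j b <;> simp [h, Finset.mul_sum]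

/-- `𝒜_{m,n} = ∑_{a,b'} τ_{ab'}`. -/
def A (m n : ℕ) : Module.End ℂ (Tens N m n) :=
  ∑ a : Fin m, ∑ b : Fin n, tauC N m n a b

/-- The traceless subspace: common kernel of all contractions. -/
def traceless0 (m n : ℕ) : Submodule ℂ (Tens N m n) :=
  ⨅ a : Fin m, ⨅ b : Fin n, LinearMap.ker (ctr N m n a b)

/-- `ℒ_m`: the sum of the transpositions of the V-factors. -/
def LOp (m n : ℕ) : Module.End ℂ (Tens N m n) :=
  ∑ x ∈ Finset.univ.filter (fun x : Fin m × Fin m => x.1 < x.2),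
    permU N m n (Equiv.swap x.1 x.2)

/-- `ℛ_n`: the sum of the transpositions of the V*-factors. -/
def ROp (m n : ℕ) : Module.End ℂ (Tens N m n) :=
  ∑ x ∈ Finset.univ.filter (fun x : Fin n × Fin n => x.1 < x.2),
    permD N m n (Equiv.swap x.1 x.2)

/-- The (diagonal) action of GL(N) on mixed tensors: the contragredient action on
the covariant indices. -/
def glAct (m n : ℕ) (g : GL (Fin N) ℂ) : Module.End ℂ (Tens N m n) where
  toFun t := fun i j => ∑ i' : Fin m → Fin N, ∑ j' : Fin n → Fin N,
    ((∏ a : Fin m, (g : Matrix (Fin N) (Fin N) ℂ) (i a) (i' a)) *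
      ∏ b : Fin n, ((g⁻¹ : GL (Fin N) ℂ) : Matrix (Fin N) (Fin N) ℂ) (j' b) (j b)) *
        t i' j'
  map_add' t s := by
    funext i j
    simp only [Pi.add_apply, mul_add, Finset.sum_add_distrib]
  map_smul' c t := by
    funext i j
    simp only [Pi.smul_apply, smul_eq_mul, RingHom.id_apply, Finset.mul_sum]
    refine Finset.sum_congr rfl fun i' _ => Finset.sum_congr rfl fun j' _ => by ring

/-- The centraliser algebra `C_{m,n}(N) = End_{GL(N)}(V^{m,n})`. -/
def Cent (m n : ℕ) : Subalgebra ℂ (Module.End ℂ (Tens N m n)) :=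
  Subalgebra.centralizer ℂ (Set.range (glAct N m n))

end Mixed

namespace Mixed

/-- The subspace V₁^{m,n}: the span of the images of the insertion maps (equal to
the span of the images of the operators τ_{ab'}, since the contractions are
surjective). -/
def traceSpan0 (N m n : ℕ) : Submodule ℂ (Tens N m n) :=
  ⨆ a : Fin m, ⨆ b : Fin n, LinearMap.range (tauC N m n a b)

end Mixed

namespace Mixed

theorem double_comm {G W : Type} [Group G] [Fintype G] [AddCommGroup W] [Module ℂ W]
    [Module.Finite ℂ W] (ρ : Representation ℂ G W) (c : Module.End ℂ W)
    (hc : ∀ B : Module.End ℂ W, (∀ g, B * ρ g = ρ g * B) → c * B = B * c) :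
    ∃ a : G → ℂ, c = ∑ g, a g • ρ g := by
  classical
  let e : ρ.asModule ≃+ W := ρ.asModuleEquiv.toAddEquiv
  have key : ∀ (B : Module.End (MonoidAlgebra ℂ G) ρ.asModule) (x : ρ.asModule),
      e.symm (c (e (B x))) = B (e.symm (c (e x))) := by
    intro B x
    let B' : Module.End ℂ W :=
      { toFun := fun w => e (B (e.symm w))
        map_add' := by intro x y; simp
        map_smul' := by
          intro r w
          have h1 : e.symm (r • w) = (algebraMap ℂ (MonoidAlgebra ℂ G) r) • e.symm w := by
            apply e.injective
            rw [AddEquiv.apply_symm_apply]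
            have := Representation.asModuleEquiv_map_smul ρ (algebraMap ℂ (MonoidAlgebra ℂ G) r) (e.symm w)
            refine Eq.trans ?_ this.symm
            simp only [AlgHom.commutes]
            rfl
          rw [h1, map_smul]
          have := Representation.asModuleEquiv_map_smul ρ (algebraMap ℂ (MonoidAlgebra ℂ G) r) (B (e.symm w))
          refine Eq.trans this ?_
          simp only [AlgHom.commutes]
          rfl }
    have hB : ∀ g, B' * ρ g = ρ g * B' := by
      intro g
      ext w
      change e (B (e.symm (ρ g w))) = ρ g (e (B (e.symm w)))
      have h1 : e.symm (ρ g w) = (MonoidAlgebra.of ℂ G g) • e.symm w := by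
        apply e.injective
        rw [AddEquiv.apply_symm_apply]
        have := Representation.asModuleEquiv_map_smul ρ (MonoidAlgebra.of ℂ G g) (e.symm w)
        refine Eq.trans ?_ this.symm
        rw [Representation.asAlgebraHom_of]
        rfl
      rw [h1, map_smul]
      have := Representation.asModuleEquiv_map_smul ρ (MonoidAlgebra.of ℂ G g) (B (e.symm w))
      refine Eq.trans this ?_
      rw [Representation.asAlgebraHom_of]
      rfl
    have := LinearMap.congr_fun (hc B' hB) (e x)
    change c (e (B (e.symm (e x)))) = e (B (e.symm (c (e x)))) at this
    rw [AddEquiv.symm_apply_apply] at this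
    rw [this, AddEquiv.symm_apply_apply]
  let f : Module.End (Module.End (MonoidAlgebra ℂ G) ρ.asModule) ρ.asModule :=
    { toFun := fun x => e.symm (c (e x))
      map_add' := by intro x y; simp
      map_smul' := by intro B x; exact key B x }
  let b := Module.finBasis ℂ W
  obtain ⟨r, hr⟩ := jacobson_density (R := MonoidAlgebra ℂ G) f
    (Finset.univ.image fun i => e.symm (b i))
  refine ⟨fun g => r.coeff g, ?_⟩
  apply b.ext
  intro i
  have := congrArg e (hr (e.symm (b i)) (Finset.mem_image_of_mem _ (Finset.mem_univ _)))
  change e (e.symm (c (e (e.symm (b i))))) = _ at this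
  rw [AddEquiv.apply_symm_apply, AddEquiv.apply_symm_apply] at this
  rw [this]
  refine (Representation.asModuleEquiv_map_smul ρ r _).trans ?_
  rw [Representation.asAlgebraHom_def, MonoidAlgebra.lift_apply, Finsupp.sum_fintype _ _ (by simp)]
  rfl

theorem exists_perm_of_count {α Y : Type} [Fintype α] [DecidableEq α] [DecidableEq Y]
    (z z' : α → Y) (h : ∑ a, Finsupp.single (z a) (1:ℕ) = ∑ a, Finsupp.single (z' a) 1) :
    ∃ σ : Equiv.Perm α, z' ∘ σ = z := by
  have hc : ∀ c, Nonempty ({a // z a = c} ≃ {a // z' a = c}) := by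
    intro c
    rw [← Fintype.card_eq, Fintype.card_subtype, Fintype.card_subtype]
    have := DFunLike.congr_fun h c
    simpa [Finsupp.finsetSum_apply, Finsupp.single_apply, Finset.sum_boole] using this
  refine ⟨Equiv.ofFiberEquiv fun c => (hc c).some, ?_⟩
  funext a
  exact Equiv.ofFiberEquiv_map _ a

theorem sym_vanish {α : Type} [Fintype α] [DecidableEq α] {N : ℕ}
    (F : (α → Fin N) × (α → Fin N) → ℂ)
    (hF : ∀ g : GL (Fin N) ℂ, ∑ x, F x * ∏ a, (g : Matrix (Fin N) (Fin N) ℂ) (x.1 a) (x.2 a) = 0)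
    (B : (α → Fin N) × (α → Fin N) → ℂ)
    (hB : ∀ (σ : Equiv.Perm α) x, B (x.1 ∘ σ, x.2 ∘ σ) = B x) :
    ∑ x, F x * B x = 0 := by
  classical
  let d : (α → Fin N) × (α → Fin N) → (Fin N × Fin N →₀ ℕ) :=
    fun x => ∑ a, Finsupp.single (x.1 a, x.2 a) 1
  have hp : (∑ x, MvPolynomial.monomial (d x) (F x) : MvPolynomial (Fin N × Fin N) ℂ) = 0 := by
    apply MvPolynomial.eq_of_eval_eq_on_gl
    intro g
    rw [map_zero, ← hF g, map_sum]
    refine Finset.sum_congr rfl fun x _ => ?_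
    have : (MvPolynomial.monomial (d x) (F x) : MvPolynomial (Fin N × Fin N) ℂ)
        = MvPolynomial.C (F x) * ∏ a, MvPolynomial.X (x.1 a, x.2 a) := by
      exact MvPolynomial.monomial_sum_index _ _ _
    rw [this]
    simp
  have hco : ∀ e, ∑ x with d x = e, F x = 0 := by
    intro e
    have := congrArg (MvPolynomial.coeff e) hp
    simpa [MvPolynomial.coeff_sum, MvPolynomial.coeff_monomial, Finset.sum_filter] using this
  rw [← Finset.sum_fiberwise_of_maps_to (s := Finset.univ) (t := Finset.univ.image d) (g := d)
    (fun x _ => Finset.mem_image_of_mem _ (Finset.mem_univ _))]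
  refine Finset.sum_eq_zero fun e he => ?_
  obtain ⟨x0, -, rfl⟩ := Finset.mem_image.1 he
  have : ∀ x ∈ Finset.univ.filter (fun x => d x = d x0), F x * B x = F x * B x0 := by
    intro x hx
    have hx' : d x = d x0 := (Finset.mem_filter.1 hx).2
    obtain ⟨σ, hσ⟩ := exists_perm_of_count (fun a => (x.1 a, x.2 a)) (fun a => (x0.1 a, x0.2 a)) hx'
    have : x = (x0.1 ∘ σ, x0.2 ∘ σ) := by
      ext a
      · exact congrArg Fin.val (congrArg Prod.fst (congrFun hσ a)).symm
      · exact congrArg Fin.val (congrArg Prod.snd (congrFun hσ a)).symm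
    rw [this, hB]
  rw [Finset.sum_congr rfl this, ← Finset.sum_mul, hco, zero_mul]

/-- tensor power of a matrix -/
def TP (α : Type) [Fintype α] {N : ℕ} (g : Matrix (Fin N) (Fin N) ℂ) :
    Matrix (α → Fin N) (α → Fin N) ℂ := fun u w => ∏ a, g (u a) (w a)

/-- permutation matrix on the tensor power -/
def PM {α : Type} [Fintype α] {N : ℕ} (σ : Equiv.Perm α) :
    Matrix (α → Fin N) (α → Fin N) ℂ := fun u w => if u ∘ σ = w then 1 else 0

def permRep (α : Type) (N : ℕ) : Representation ℂ (Equiv.Perm α) ((α → Fin N) → ℂ) where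
  toFun σ :=
    { toFun := fun f u => f (u ∘ σ)
      map_add' := fun _ _ => rfl
      map_smul' := fun _ _ => rfl }
  map_one' := rfl
  map_mul' _ _ := rfl

theorem fft {α : Type} [Fintype α] [DecidableEq α] {N : ℕ}
    (K : Matrix (α → Fin N) (α → Fin N) ℂ)
    (hK : ∀ g : GL (Fin N) ℂ, K * TP α (g : Matrix (Fin N) (Fin N) ℂ) = TP α g.1 * K) :
    ∃ a : Equiv.Perm α → ℂ, K = ∑ σ, a σ • PM σ := by
  have hcomm : ∀ B : Matrix (α → Fin N) (α → Fin N) ℂ,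
      (∀ (σ : Equiv.Perm α) u w, B (u ∘ σ) (w ∘ σ) = B u w) → K * B = B * K := by
    intro B hB
    ext u v
    have key : ∀ C : Matrix (α → Fin N) (α → Fin N) ℂ, (K * C) u v - (C * K) u v =
        ∑ x : (α → Fin N) × (α → Fin N),
          ((if x.2 = v then K u x.1 else 0) - (if x.1 = u then K x.2 v else 0)) * C x.1 x.2 := by
      intro C
      simp only [sub_mul, Finset.sum_sub_distrib, Fintype.sum_prod_type, ite_mul, zero_mul,
        Matrix.mul_apply]
      congr 1
      · simp
      · rw [Finset.sum_comm]
        simp [mul_comm]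
    rw [← sub_eq_zero, key]
    apply sym_vanish _ _ (fun x => B x.1 x.2)
    · intro σ x; exact hB σ _ _
    · intro g
      have := key (TP α g.1)
      rw [hK g, sub_self] at this
      exact this.symm
  obtain ⟨a, ha⟩ := double_comm (permRep α N) (Matrix.toLin' K) (by
    intro B hB
    apply LinearMap.toMatrix'.injective
    rw [LinearMap.toMatrix'_mul, LinearMap.toMatrix'_mul, LinearMap.toMatrix'_toLin']
    apply hcomm
    intro σ u w
    have := congrFun (LinearMap.congr_fun (hB σ) (Pi.single (w ∘ σ) 1)) u
    rw [LinearMap.toMatrix'_apply, LinearMap.toMatrix'_apply]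
    change B (fun u => (Pi.single (w ∘ σ) 1 : (α → Fin N) → ℂ) (u ∘ σ)) u
      = B (Pi.single (w ∘ σ) 1) (u ∘ σ) at this
    have h2 : (fun u : α → Fin N => (Pi.single (w ∘ σ) 1 : (α → Fin N) → ℂ) (u ∘ σ))
        = Pi.single w 1 := by
      funext u
      simp [Pi.single_apply, σ.surjective.injective_comp_right.eq_iff]
    rw [h2] at this
    have h3 : (fun j' => if j' = w ∘ σ then (1:ℂ) else 0) = Pi.single (w ∘ σ) 1 := by
      funext j; simp [Pi.single_apply]
    have h4 : (fun j' => if j' = w then (1:ℂ) else 0) = Pi.single w 1 := by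
      funext j; simp [Pi.single_apply]
    simp only [this])
  refine ⟨a, ?_⟩
  apply Matrix.toLin'.injective
  rw [ha, map_sum]
  refine Finset.sum_congr rfl fun σ _ => ?_
  rw [map_smul]
  congr 1
  apply LinearMap.ext
  intro f
  funext u
  change f (u ∘ σ) = _
  simp [PM, Matrix.mulVec, dotProduct]

theorem TP_mul {α : Type} [Fintype α] [DecidableEq α] {N : ℕ} (g h : Matrix (Fin N) (Fin N) ℂ) :
    TP α g * TP α h = TP α (g * h) := by
  ext u w
  simp only [TP, Matrix.mul_apply, Finset.prod_univ_sum, Fintype.piFinset_univ,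
    Finset.prod_mul_distrib]

theorem TP_one {α : Type} [Fintype α] [DecidableEq α] {N : ℕ} :
    TP α (1 : Matrix (Fin N) (Fin N) ℂ) = 1 := by
  ext u w
  simp only [TP, Matrix.one_apply, Finset.prod_ite_zero, Finset.prod_const_one, funext_iff]
  simp

theorem sum_sumArrow {α β X : Type} [Fintype α] [Fintype β] [DecidableEq α] [DecidableEq β]
    [Fintype X] (f : (α ⊕ β → X) → ℂ) :
    ∑ u, f u = ∑ i : α → X, ∑ j : β → X, f (Sum.elim i j) := by
  rw [← (Equiv.sumArrowEquivProdArrow α β X).symm.sum_comp, Fintype.sum_prod_type]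
  rfl

theorem TP_elim {m n N : ℕ} (g : Matrix (Fin N) (Fin N) ℂ) (i i' : Fin m → Fin N)
    (j j' : Fin n → Fin N) :
    TP (Fin m ⊕ Fin n) g (Sum.elim i j) (Sum.elim i' j') = TP (Fin m) g i i' * TP (Fin n) g j j' := by
  simp [TP]

/-- operator on mixed tensors with partially transposed kernel `K` -/
def kop (N m n : ℕ) : Matrix (Fin m ⊕ Fin n → Fin N) (Fin m ⊕ Fin n → Fin N) ℂ →ₗ[ℂ]
    Module.End ℂ (Tens N m n) where
  toFun K :=
    { toFun := fun t i j => ∑ i', ∑ j', K (Sum.elim i j') (Sum.elim i' j) * t i' j'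
      map_add' := by
        intro t s; funext i j
        simp only [Pi.add_apply, mul_add, Finset.sum_add_distrib]
      map_smul' := by
        intro c t; funext i j
        simp only [Pi.smul_apply, smul_eq_mul, RingHom.id_apply, Finset.mul_sum]
        refine Finset.sum_congr rfl fun i' _ => Finset.sum_congr rfl fun j' _ => by ring }
  map_add' := by
    intro K K'; apply LinearMap.ext; intro t; funext i j
    simp [add_mul, Finset.sum_add_distrib]
  map_smul' := by
    intro c K; apply LinearMap.ext; intro t; funext i j
    simp [Finset.mul_sum, mul_assoc]

theorem kop_apply {N m n : ℕ} (K) (t : Tens N m n) (i j) :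
    kop N m n K t i j = ∑ i', ∑ j', K (Sum.elim i j') (Sum.elim i' j) * t i' j' := rfl

theorem exists_kop {N m n : ℕ} (c : Module.End ℂ (Tens N m n)) : ∃ K, c = kop N m n K := by
  let E : (Fin m → Fin N) → (Fin n → Fin N) → Tens N m n :=
    fun i' j' i j => if i = i' ∧ j = j' then 1 else 0
  refine ⟨Matrix.of fun u w => c (E (w ∘ Sum.inl) (u ∘ Sum.inr)) (u ∘ Sum.inl) (w ∘ Sum.inr), ?_⟩
  apply LinearMap.ext; intro t
  have ht : t = ∑ i', ∑ j', t i' j' • E i' j' := by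
    funext i j
    simp [E, Finset.sum_apply, ite_and]
  funext i j
  rw [kop_apply]
  conv_lhs => rw [ht]
  simp only [Matrix.of_apply, map_sum, map_smul, Finset.sum_apply, Pi.smul_apply, smul_eq_mul, Sum.elim_comp_inl,
    Sum.elim_comp_inr]
  refine Finset.sum_congr rfl fun i' _ => Finset.sum_congr rfl fun j' _ => mul_comm _ _

theorem glAct_apply {N m n : ℕ} (g : GL (Fin N) ℂ) (t : Tens N m n) (i j) :
    glAct N m n g t i j = ∑ i', ∑ j', (TP (Fin m) g.1 i i' *
      TP (Fin n) (g⁻¹ : GL (Fin N) ℂ).1 j' j) * t i' j' := rfl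

theorem kop_comm {N m n : ℕ} (K : Matrix (Fin m ⊕ Fin n → Fin N) (Fin m ⊕ Fin n → Fin N) ℂ)
    (g : GL (Fin N) ℂ) (h : glAct N m n g * kop N m n K = kop N m n K * glAct N m n g) :
    K * TP (Fin m ⊕ Fin n) (g : Matrix (Fin N) (Fin N) ℂ) = TP (Fin m ⊕ Fin n) g.1 * K := by
  have h1 : ∀ x z : Fin n → Fin N, ∑ j', TP (Fin n) g.1 x j' * TP (Fin n) (g⁻¹ : GL (Fin N) ℂ).1 j' z
      = if x = z then 1 else 0 := by
    intro x z
    have : TP (Fin n) g.1 * TP (Fin n) (g⁻¹ : GL (Fin N) ℂ).1 = 1 := by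
      rw [TP_mul, ← TP_one]; congr 1; exact g.mul_inv
    have := congrFun (congrFun this x) z
    rwa [Matrix.mul_apply, Matrix.one_apply] at this
  have h2 : ∀ x z : Fin n → Fin N, ∑ j', TP (Fin n) (g⁻¹ : GL (Fin N) ℂ).1 x j' * TP (Fin n) g.1 j' z
      = if x = z then 1 else 0 := by
    intro x z
    have : TP (Fin n) (g⁻¹ : GL (Fin N) ℂ).1 * TP (Fin n) g.1 = 1 := by
      rw [TP_mul, ← TP_one]; congr 1; exact g.inv_mul
    have := congrFun (congrFun this x) z
    rwa [Matrix.mul_apply, Matrix.one_apply] at this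
  suffices H : ∀ (i i'' : Fin m → Fin N) (x y : Fin n → Fin N),
      (K * TP (Fin m ⊕ Fin n) g.1) (Sum.elim i x) (Sum.elim i'' y)
        = (TP (Fin m ⊕ Fin n) g.1 * K) (Sum.elim i x) (Sum.elim i'' y) by
    ext u w
    have := H (u ∘ Sum.inl) (w ∘ Sum.inl) (u ∘ Sum.inr) (w ∘ Sum.inr)
    simpa [Sum.elim_comp_inl_inr] using this
  intro i i'' x y
  let t : Tens N m n := fun i' j' => if i' = i'' then TP (Fin n) g.1 x j' else 0
  have hgt : ∀ i j, glAct N m n g t i j = if x = j then TP (Fin m) g.1 i i'' else 0 := by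
    intro i j
    rw [glAct_apply]
    have : ∀ i', ∑ j', (TP (Fin m) g.1 i i' *
      TP (Fin n) (g⁻¹ : GL (Fin N) ℂ).1 j' j) * t i' j' = if i' = i'' then TP (Fin m) g.1 i i' *
        (if x = j then 1 else 0) else 0 := by
      intro i'
      rw [← h1, Finset.mul_sum]
      by_cases hi : i' = i''
      · simp only [t, hi, if_true]
        refine Finset.sum_congr rfl fun j' _ => by ring
      · simp [t, hi]
    simp only [this, Finset.sum_ite_eq', Finset.mem_univ, if_true, mul_ite, mul_one, mul_zero]
  have e1 : (K * TP (Fin m ⊕ Fin n) g.1) (Sum.elim i x) (Sum.elim i'' y)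
      = ∑ j, (kop N m n K * glAct N m n g) t i j * TP (Fin n) g.1 j y := by
    rw [Matrix.mul_apply, sum_sumArrow, Finset.sum_comm]
    refine Finset.sum_congr rfl fun j _ => ?_
    rw [Module.End.mul_apply, kop_apply, Finset.sum_mul]
    refine Finset.sum_congr rfl fun i' _ => ?_
    simp only [hgt, TP_elim, mul_ite, mul_zero, Finset.sum_ite_eq, Finset.mem_univ, if_true]
    ring
  have e2 : (TP (Fin m ⊕ Fin n) g.1 * K) (Sum.elim i x) (Sum.elim i'' y)
      = ∑ j, (glAct N m n g * kop N m n K) t i j * TP (Fin n) g.1 j y := by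
    have hc : ∀ i' j', kop N m n K t i' j' = ∑ j'', K (Sum.elim i' j'') (Sum.elim i'' j') *
        TP (Fin n) g.1 x j'' := by
      intro i' j'
      rw [kop_apply, Finset.sum_comm]
      simp [t]
    have : ∀ j, (glAct N m n g * kop N m n K) t i j * TP (Fin n) g.1 j y =
      ∑ i', ∑ j', TP (Fin m) g.1 i i' * kop N m n K t i' j' *
        (TP (Fin n) (g⁻¹ : GL (Fin N) ℂ).1 j' j * TP (Fin n) g.1 j y) := by
      intro j
      rw [Module.End.mul_apply, glAct_apply, Finset.sum_mul]
      refine Finset.sum_congr rfl fun i' _ => ?_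
      rw [Finset.sum_mul]
      refine Finset.sum_congr rfl fun j' _ => by ring
    simp only [this]
    rw [Finset.sum_comm, Matrix.mul_apply, sum_sumArrow]
    refine Finset.sum_congr rfl fun i' _ => ?_
    rw [Finset.sum_comm]
    simp only [← Finset.mul_sum, h2, mul_ite, mul_zero, mul_one, Finset.sum_ite_eq',
      Finset.mem_univ, if_true, hc, TP_elim]
    rw [Finset.mul_sum]
    refine Finset.sum_congr rfl fun j' _ => by ring
  rw [e1, e2, h]

theorem cent_span {N m n : ℕ} (c : Module.End ℂ (Tens N m n)) (hc : c ∈ Cent N m n) :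
    ∃ a : Equiv.Perm (Fin m ⊕ Fin n) → ℂ, c = ∑ σ, a σ • kop N m n (PM σ) := by
  obtain ⟨K, rfl⟩ := exists_kop c
  obtain ⟨a, rfl⟩ := fft K (fun g => kop_comm K g (by
    rw [Cent, Subalgebra.mem_centralizer_iff] at hc
    exact hc _ ⟨g, rfl⟩))
  exact ⟨a, by simp⟩

theorem sign_sum {N m n : ℕ} (h : N < m + n) :
    ∑ σ : Equiv.Perm (Fin m ⊕ Fin n), ((Equiv.Perm.sign σ : ℤ) : ℂ) •
      (PM σ : Matrix (Fin m ⊕ Fin n → Fin N) (Fin m ⊕ Fin n → Fin N) ℂ) = 0 := by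
  ext u w
  have hu : ¬ Function.Injective u := by
    intro hu
    have := Fintype.card_le_of_injective u hu
    simp at this
    omega
  simp only [Function.Injective, not_forall] at hu
  obtain ⟨x, y, hxy, hne⟩ := hu
  let M : Matrix (Fin m ⊕ Fin n) (Fin m ⊕ Fin n) ℂ := fun x y => if u x = w y then 1 else 0
  have hdet : M.det = 0 := Matrix.det_zero_of_row_eq hne (by funext z; simp [M, hxy])
  rw [Matrix.det_apply] at hdet
  rw [Matrix.zero_apply, ← hdet, Matrix.sum_apply]
  refine Finset.sum_congr rfl fun σ _ => ?_
  simp only [Matrix.smul_apply, PM, M, Finset.prod_ite_zero, Finset.prod_const_one, funext_iff]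
  simp [Units.smul_def]

/-- the action of the product of symmetric groups -/
def RR (N m n : ℕ) : Equiv.Perm (Fin m) × Equiv.Perm (Fin n) →* Module.End ℂ (Tens N m n) where
  toFun x := permU N m n x.1 * permD N m n x.2
  map_one' := rfl
  map_mul' _ _ := rfl

theorem RR_apply {N m n : ℕ} (x) (t : Tens N m n) (i j) :
    RR N m n x t i j = t (i ∘ x.1) (j ∘ x.2) := rfl

theorem update_comp {m : ℕ} {X : Type} (i : Fin m → X) (a : Fin m) (k : X) (p : Equiv.Perm (Fin m)) :
    Function.update i (p a) k ∘ p = Function.update (i ∘ p) a k :=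
  Function.update_comp_eq_of_injective _ p.injective _ _

theorem RR_mem_cent {N m n : ℕ} (x) : RR N m n x ∈ Cent N m n := by
  rw [Cent, Subalgebra.mem_centralizer_iff]
  rintro _ ⟨g, rfl⟩
  apply LinearMap.ext; intro t; funext i j
  rw [Module.End.mul_apply, Module.End.mul_apply, RR_apply, glAct_apply, glAct_apply]
  symm
  rw [← (x.1.arrowCongr (Equiv.refl (Fin N))).symm.sum_comp]
  refine Finset.sum_congr rfl fun i' _ => ?_
  rw [← (x.2.arrowCongr (Equiv.refl (Fin N))).symm.sum_comp]
  refine Finset.sum_congr rfl fun j' _ => ?_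
  rw [RR_apply]
  have h1 : TP (Fin m) g.1 (i ∘ x.1) ((x.1.arrowCongr (Equiv.refl (Fin N))).symm i') =
      TP (Fin m) g.1 i i' := Equiv.prod_comp x.1 (fun a => g.1 (i a) (i' a))
  have h2 : TP (Fin n) (g⁻¹ : GL (Fin N) ℂ).1 ((x.2.arrowCongr (Equiv.refl (Fin N))).symm j') (j ∘ x.2) =
      TP (Fin n) (g⁻¹ : GL (Fin N) ℂ).1 j' j :=
    Equiv.prod_comp x.2 (fun a => (g⁻¹ : GL (Fin N) ℂ).1 (j' a) (j a))
  rw [h1, h2]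
  rfl

theorem RR_traceless {N m n : ℕ} (x) (t : Tens N m n) (ht : t ∈ traceless0 N m n) :
    RR N m n x t ∈ traceless0 N m n := by
  simp only [traceless0, Submodule.mem_iInf, LinearMap.mem_ker] at ht ⊢
  intro a b
  obtain ⟨a, rfl⟩ := x.1.surjective a
  obtain ⟨b, rfl⟩ := x.2.surjective b
  funext i j
  have := congrFun (congrFun (ht a b) (i ∘ x.1)) (j ∘ x.2)
  change ∑ k, RR N m n x t (Function.update i (x.1 a) k) (Function.update j (x.2 b) k) = 0
  simp only [RR_apply, update_comp]
  exact this

theorem RR_tau {N m n : ℕ} (x) (t : Tens N m n) (a b) :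
    RR N m n x (tauC N m n a b t) = tauC N m n (x.1 a) (x.2 b) (RR N m n x t) := by
  funext i j
  change (if i (x.1 a) = j (x.2 b) then ∑ k, t (Function.update (i ∘ x.1) a k)
    (Function.update (j ∘ x.2) b k) else 0) = if i (x.1 a) = j (x.2 b) then
    ∑ k, RR N m n x t (Function.update i (x.1 a) k) (Function.update j (x.2 b) k) else 0
  simp only [RR_apply, update_comp]

theorem tau_mem {N m n : ℕ} (t : Tens N m n) (a b) : tauC N m n a b t ∈ traceSpan0 N m n :=
  Submodule.mem_iSup_of_mem a (Submodule.mem_iSup_of_mem b ⟨t, rfl⟩)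

theorem traceSpan_le {N m n : ℕ} (S : Submodule ℂ (Tens N m n))
    (h : ∀ a b t, tauC N m n a b t ∈ S) : traceSpan0 N m n ≤ S := by
  refine iSup_le fun a => iSup_le fun b => ?_
  rintro _ ⟨t, rfl⟩
  exact h a b t

theorem kop_traceSpan {N m n : ℕ} (hN : 1 ≤ N) (σ : Equiv.Perm (Fin m ⊕ Fin n)) (a : Fin m)
    (b : Fin n) (hab : σ (Sum.inr b) = Sum.inl a) (t : Tens N m n) :
    kop N m n (PM σ) t ∈ traceSpan0 N m n := by
  have hN' : (N : ℂ) ≠ 0 := by exact_mod_cast (by omega : N ≠ 0)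
  have key : tauC N m n a b (kop N m n (PM σ) t) = (N : ℂ) • kop N m n (PM σ) t := by
    funext i j
    change (if i a = j b then ∑ k, kop N m n (PM σ) t (Function.update i a k) (Function.update j b k)
      else 0) = (N : ℂ) * kop N m n (PM σ) t i j
    split_ifs with hij
    · have : ∀ k, kop N m n (PM σ) t (Function.update i a k) (Function.update j b k)
          = kop N m n (PM σ) t i j := by
        intro k
        simp only [kop_apply]
        refine Finset.sum_congr rfl fun i' _ => Finset.sum_congr rfl fun j' _ => ?_
        congr 1
        unfold PM
        congr 1
        rw [eq_iff_iff, funext_iff, funext_iff]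
        refine forall_congr' fun x => ?_
        by_cases hx : x = Sum.inr b
        · subst hx
          simp only [Function.comp, hab, Sum.elim_inl, Sum.elim_inr, Function.update_self, hij]
        · have h1 : σ x ≠ Sum.inl a := fun h => hx (σ.injective (h.trans hab.symm))
          have e1 : Sum.elim (Function.update i a k) j' (σ x) = Sum.elim i j' (σ x) := by
            rcases hs : σ x with y | y
            · have : y ≠ a := fun h => h1 (by rw [hs, h])
              simp [this]
            · simp
          have e2 : Sum.elim i' (Function.update j b k) x = Sum.elim i' j x := by
            rcases x with y | y
            · simp
            · have : y ≠ b := fun h => hx (by rw [h])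
              simp [this]
          simp only [Function.comp, e1, e2]
      simp [this]
    · rw [kop_apply, eq_comm]
      refine mul_eq_zero_of_right _ (Finset.sum_eq_zero fun i' _ => Finset.sum_eq_zero fun j' _ => ?_)
      rw [PM, if_neg, zero_mul]
      intro h
      have := congrFun h (Sum.inr b)
      simp [hab] at this
      exact hij this
  have := Submodule.smul_mem _ (N : ℂ)⁻¹ (key ▸ tau_mem (kop N m n (PM σ) t) a b)
  rwa [smul_smul, inv_mul_cancel₀ hN', one_smul] at this

theorem kop_sumCongr {N m n : ℕ} (p : Equiv.Perm (Fin m)) (q : Equiv.Perm (Fin n)) :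
    kop N m n (PM (Equiv.sumCongr p q)) = RR N m n (p, q⁻¹) := by
  apply LinearMap.ext; intro t; funext i j
  rw [kop_apply, RR_apply]
  have : ∀ i' j', (PM (Equiv.sumCongr p q) : Matrix _ (Fin m ⊕ Fin n → Fin N) ℂ)
      (Sum.elim i j') (Sum.elim i' j) =
      if i' = i ∘ p then (if j' = j ∘ (q⁻¹ : Equiv.Perm (Fin n)) then 1 else 0) else 0 := by
    intro i' j'
    unfold PM
    rw [← ite_and]
    congr 1
    rw [eq_iff_iff]
    constructor
    · intro h
      constructor
      · funext x; exact (congrFun h (Sum.inl x)).symm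
      · funext x; simpa using congrFun h (Sum.inr (q⁻¹ x))
    · rintro ⟨rfl, rfl⟩
      funext x
      rcases x with x | x <;> simp
  simp [this]

/-- action of the group algebra -/
def LL (N m n : ℕ) : MonoidAlgebra ℂ (Equiv.Perm (Fin m) × Equiv.Perm (Fin n)) →ₐ[ℂ]
    Module.End ℂ (Tens N m n) := MonoidAlgebra.lift _ _ _ (RR N m n)

theorem exists_rep {N m n : ℕ} (hN : 1 ≤ N) (P : Module.End ℂ (Tens N m n))
    (hker : LinearMap.ker P = traceSpan0 N m n) (σ : Equiv.Perm (Fin m ⊕ Fin n)) :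
    ∃ r : MonoidAlgebra ℂ (Equiv.Perm (Fin m) × Equiv.Perm (Fin n)),
      P * kop N m n (PM σ) = P * LL N m n r ∧ r.coeff 1 = if σ = 1 then 1 else 0 := by
  by_cases h : ∃ a b, σ (Sum.inr b) = Sum.inl a
  · obtain ⟨a, b, hab⟩ := h
    refine ⟨0, ?_, ?_⟩
    · rw [map_zero, mul_zero]
      apply LinearMap.ext; intro t
      have := kop_traceSpan hN σ a b hab t
      rw [← hker] at this
      exact this
    · rw [if_neg]
      · rfl
      · rintro rfl
        simp at hab
  · have h' : Set.MapsTo σ (Set.range Sum.inl) (Set.range Sum.inl) := by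
      rw [Equiv.Perm.perm_mapsTo_inl_iff_mapsTo_inr]
      rintro _ ⟨b, rfl⟩
      rcases hs : σ (Sum.inr b) with a | b'
      · exact absurd ⟨a, b, hs⟩ h
      · exact ⟨b', rfl⟩
    obtain ⟨⟨p, q⟩, rfl⟩ := Equiv.Perm.mem_sumCongrHom_range_of_perm_mapsTo_inl h'
    refine ⟨MonoidAlgebra.single (p, q⁻¹) 1, ?_, ?_⟩
    · change P * kop N m n (PM (Equiv.sumCongr p q)) = _
      rw [kop_sumCongr, LL, MonoidAlgebra.lift_single, one_smul]
    · rw [MonoidAlgebra.coeff_single, Finsupp.single_apply]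
      congr 1
      rw [eq_iff_iff, map_eq_one_iff _ Equiv.Perm.sumCongrHom_injective]
      simp [Prod.ext_iff]

theorem LL_apply {N m n : ℕ} (x) (t : Tens N m n) (i j) :
    LL N m n x t i j = ∑ y, x.coeff y * t (i ∘ y.1) (j ∘ y.2) := by
  rw [LL, MonoidAlgebra.lift_apply, Finsupp.sum_fintype _ _ (by simp)]
  simp only [LinearMap.sum_apply, Finset.sum_apply]
  rfl

theorem LL_mem {N m n : ℕ} (x) : LL N m n x ∈ Cent N m n := by
  rw [LL, MonoidAlgebra.lift_apply]
  exact Subalgebra.sum_mem _ fun y _ => Subalgebra.smul_mem _ (RR_mem_cent y) _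

theorem LL_comm {N m n : ℕ} (P : Module.End ℂ (Tens N m n))
    (hidem : IsIdempotentElem P)
    (hrange : LinearMap.range P = traceless0 N m n)
    (hker : LinearMap.ker P = traceSpan0 N m n) (x) : P * LL N m n x = LL N m n x * P := by
  have h : ∀ y, Commute P (RR N m n y) := by
    intro y
    rw [LinearMap.IsIdempotentElem.commute_iff hidem, hrange, hker]
    constructor
    · intro t ht; exact RR_traceless y t ht
    · apply traceSpan_le
      intro a b t
      rw [Submodule.mem_comap, RR_tau]
      exact tau_mem _ _ _
  rw [LL, MonoidAlgebra.lift_apply]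
  exact Commute.sum_right _ _ _ fun y _ => (h y).smul_right _

theorem LL_inj {N m n : ℕ} (h : m + n ≤ N) (P : Module.End ℂ (Tens N m n))
    (hidem : IsIdempotentElem P)
    (hrange : LinearMap.range P = traceless0 N m n) (x) (hx : P * LL N m n x = 0) : x = 0 := by
  let i0 : Fin m → Fin N := fun a => ⟨a, by omega⟩
  let j0 : Fin n → Fin N := fun b => ⟨m + b, by omega⟩
  have hi0 : Function.Injective i0 := fun a b hab => by
    simpa [i0, Fin.ext_iff] using hab
  have hj0 : Function.Injective j0 := fun a b hab => by
    simpa [j0, Fin.ext_iff] using hab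
  let v : Tens N m n := fun i j => if i = i0 ∧ j = j0 then 1 else 0
  have hv : v ∈ traceless0 N m n := by
    simp only [traceless0, Submodule.mem_iInf, LinearMap.mem_ker]
    intro a b
    funext i j
    change ∑ k, v (Function.update i a k) (Function.update j b k) = 0
    refine Finset.sum_eq_zero fun k _ => if_neg ?_
    rintro ⟨h1, h2⟩
    have e1 : k = i0 a := by simpa using congrFun h1 a
    have e2 : k = j0 b := by simpa using congrFun h2 b
    have := e1.symm.trans e2
    simp only [i0, j0, Fin.mk.injEq] at this
    omega
  have hLv : LL N m n x v ∈ traceless0 N m n := by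
    rw [LL, MonoidAlgebra.lift_apply, Finsupp.sum, LinearMap.sum_apply]
    exact Submodule.sum_mem _ fun y _ => Submodule.smul_mem _ _ (RR_traceless y v hv)
  have h0 : LL N m n x v = 0 := by
    rw [← hrange] at hLv
    obtain ⟨s, hs⟩ := hLv
    have e : P (LL N m n x v) = 0 := LinearMap.congr_fun hx v
    have e' : P (P s) = P s := LinearMap.congr_fun hidem s
    rw [← hs, ← e', hs, e]
  apply MonoidAlgebra.coeff_injective
  ext y
  have := congrFun (congrFun h0 (i0 ∘ (y.1⁻¹ : Equiv.Perm (Fin m)))) (j0 ∘ (y.2⁻¹ : Equiv.Perm (Fin n)))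
  rw [LL_apply, Finset.sum_eq_single y] at this
  · have e : v ((i0 ∘ (y.1⁻¹ : Equiv.Perm (Fin m))) ∘ y.1)
        ((j0 ∘ (y.2⁻¹ : Equiv.Perm (Fin n))) ∘ y.2) = 1 := by
      apply if_pos
      constructor <;> funext z <;> simp
    rw [e, mul_one] at this
    exact this
  · intro z _ hz
    rw [mul_eq_zero]; right
    apply if_neg
    rintro ⟨h1, h2⟩
    apply hz
    ext w
    · have := hi0 (congrFun h1 w)
      have := congrArg y.1 this
      simpa using congrArg Fin.val this
    · have := hj0 (congrFun h2 w)
      have := congrArg y.2 this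
      simpa using congrArg Fin.val this
  · simp

end Mixed

/-- the ideal 𝒫_{m,n}·C_{m,n}(N) of the centraliser algebra is
isomorphic as an algebra to the group algebra ℂ[𝔖_m × 𝔖_n] — i.e. there is a
ℂ-linear map which restricts to a multiplicative bijection from 𝒫_{m,n}·C_{m,n}(N)
onto ℂ[𝔖_m × 𝔖_n] — if and only if N ≥ m + n. -/
theorem PC_iso_group_algebra_iff (N m n : ℕ) (hm : 1 ≤ m) (hn : 1 ≤ n) (hN : 1 ≤ N)
    (P : Module.End ℂ (Tens N m n))
    (hidem : IsIdempotentElem P)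
    (hrange : LinearMap.range P = Mixed.traceless0 N m n)
    (hker : LinearMap.ker P = Mixed.traceSpan0 N m n) :
    (∃ φ : Module.End ℂ (Tens N m n) →ₗ[ℂ]
        MonoidAlgebra ℂ (Equiv.Perm (Fin m) × Equiv.Perm (Fin n)),
      (∀ x y : Module.End ℂ (Tens N m n),
        x ∈ {y | ∃ c ∈ Mixed.Cent N m n, y = P * c} →
        y ∈ {y | ∃ c ∈ Mixed.Cent N m n, y = P * c} →
        φ (x * y) = φ x * φ y) ∧
      Set.BijOn φ {y | ∃ c ∈ Mixed.Cent N m n, y = P * c} Set.univ) ↔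
    m + n ≤ N := by
  classical
  let ψ : MonoidAlgebra ℂ (Equiv.Perm (Fin m) × Equiv.Perm (Fin n)) →ₗ[ℂ]
      Module.End ℂ (Tens N m n) :=
    (LinearMap.mulLeft ℂ P).comp (Mixed.LL N m n).toLinearMap
  have hψ : ∀ x, ψ x = P * Mixed.LL N m n x := fun x => rfl
  choose r hr hr1 using Mixed.exists_rep hN P hker
  have hspan : ∀ a : Equiv.Perm (Fin m ⊕ Fin n) → ℂ,
      P * ∑ σ, a σ • Mixed.kop N m n (Mixed.PM σ) = ψ (∑ σ, a σ • r σ) := by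
    intro a
    rw [map_sum, Finset.mul_sum]
    refine Finset.sum_congr rfl fun σ _ => ?_
    rw [map_smul, hψ, ← hr, mul_smul_comm]
  have hset : {y | ∃ c ∈ Mixed.Cent N m n, y = P * c} = Set.range ψ := by
    ext y
    constructor
    · rintro ⟨c, hc, rfl⟩
      obtain ⟨a, rfl⟩ := Mixed.cent_span c hc
      exact ⟨_, (hspan a).symm⟩
    · rintro ⟨x, rfl⟩
      exact ⟨_, Mixed.LL_mem x, rfl⟩
  rw [hset]
  constructor
  · rintro ⟨φ, -, hbij⟩
    by_contra hlt
    have hsurj : Function.Surjective (φ.comp ψ) := by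
      intro y
      obtain ⟨_, ⟨x, rfl⟩, hx⟩ := hbij.surjOn (Set.mem_univ y)
      exact ⟨x, hx⟩
    have : Module.Finite ℂ (MonoidAlgebra ℂ (Equiv.Perm (Fin m) × Equiv.Perm (Fin n))) :=
      inferInstance
    have hinj := LinearMap.injective_iff_surjective.2 hsurj
    have h0 := hspan (fun σ => ((Equiv.Perm.sign σ : ℤ) : ℂ))
    have h1 : ∑ σ : Equiv.Perm (Fin m ⊕ Fin n), ((Equiv.Perm.sign σ : ℤ) : ℂ) •
        Mixed.kop N m n (Mixed.PM σ) = 0 := by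
      have := congrArg (Mixed.kop N m n) (Mixed.sign_sum (not_le.1 hlt))
      simpa only [map_sum, map_smul, map_zero] using this
    rw [h1, mul_zero] at h0
    have h2 : (∑ σ : Equiv.Perm (Fin m ⊕ Fin n), ((Equiv.Perm.sign σ : ℤ) : ℂ) • r σ) = 0 := by
      apply hinj
      rw [LinearMap.comp_apply, ← h0, map_zero, map_zero]
    have h3 := DFunLike.congr_fun (congrArg MonoidAlgebra.coeff h2) 1
    rw [MonoidAlgebra.coeff_sum, Finsupp.finsetSum_apply] at h3
    simp [hr1] at h3
  · intro hle
    have hψinj : LinearMap.ker ψ = ⊥ := by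
      rw [LinearMap.ker_eq_bot']
      intro x hx
      exact Mixed.LL_inj hle P hidem hrange x hx
    obtain ⟨φ, hφ⟩ := LinearMap.exists_leftInverse_of_injective ψ hψinj
    have hφ' : ∀ x, φ (ψ x) = x := fun x => LinearMap.congr_fun hφ x
    refine ⟨φ, ?_, fun _ _ => Set.mem_univ _, ?_, ?_⟩
    · rintro _ _ ⟨x, rfl⟩ ⟨y, rfl⟩
      have : ψ x * ψ y = ψ (x * y) := by
        rw [hψ, hψ, hψ, map_mul, mul_assoc, ← mul_assoc (Mixed.LL N m n x),
          ← Mixed.LL_comm P hidem hrange hker x, mul_assoc, ← mul_assoc P P, hidem.eq]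
      rw [this, hφ', hφ', hφ']
    · rintro _ ⟨x, rfl⟩ _ ⟨y, rfl⟩ h
      rw [hφ', hφ'] at h
      rw [h]
    · intro y _
      exact ⟨ψ y, ⟨y, rfl⟩, hφ' y⟩
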